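/- Let n ≥ 1, let E = EuclideanSpace ℝ (Fin n), and let σ denote the canonical surface measure on the unit sphere S = {ω ∈ E : ‖ω‖ = 1}. Let u : ℝ × E → ℝ be C^∞ on (0,∞) × E and suppose that u solves the heat equation with Dirichlet boundary conditions on the closed unit ball: for all t > 0 and all x with ‖x‖ ≤ 1, ∂u/∂t(t,x) = Δ(u(t,·))(x), and u(t,y) = 0 whenever ‖y‖ = 1 and t > 0 (Δ being the analyst's Laplacian on E). Define v : ℝ × E → ℝ by v(t,x) = ⨍_S u(t, ‖x‖ • ω) dσ(ω). Then for all t > 0 and all x with ‖x‖ ≤ 1 one has ∂v/∂t(t,x) = Δ(v(t,·))(x), and v(t,y) = 0 whenever ‖y‖ = 1 and t > 0. -/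

import Mathlib

open MeasureTheory

/-- The analyst's Laplacian on `EuclideanSpace ℝ (Fin n)`: the sum of the pure second
directional derivatives along the standard orthonormal basis. -/
noncomputable def laplacian {n : ℕ} (f : EuclideanSpace ℝ (Fin n) → ℝ)
    (x : EuclideanSpace ℝ (Fin n)) : ℝ :=
  ∑ i : Fin n, iteratedFDeriv ℝ 2 f x
    ![EuclideanSpace.single i (1 : ℝ), EuclideanSpace.single i (1 : ℝ)]

/-!
The average of a function over the sphere of radius `‖x‖` is its average over the orbit of `x` under
the orthogonal group. Averaging over the compact orthogonal group commutes with the Laplacian,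
because each isometry does and second derivatives pass under the integral sign; averaging over the
sphere commutes with `∂/∂t` for the latter reason alone. Hence the radialization of a solution is a
solution, and its value at `x` depends only on the values on the sphere through `x`.
-/

open Set Function Filter Topology
open scoped Pointwise Laplacian

section ParametricIntegral

variable {K : Type*} [TopologicalSpace K] [CompactSpace K] [MeasurableSpace K]
  [OpensMeasurableSpace K] {μ : Measure K} [IsFiniteMeasure μ]
  {W : Type*} [NormedAddCommGroup W]

theorem integrable_of_continuous_of_compactSpace {f : K → W} (hf : Continuous f) :
    Integrable f μ :=
  hf.integrable_of_hasCompactSupport (.of_compactSpace f)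

variable {𝕜 : Type*} [RCLike 𝕜] [NormedSpace 𝕜 W] [NormedSpace ℝ W]
  {H : Type*} [NormedAddCommGroup H] [NormedSpace 𝕜 H]

theorem hasFDerivAt_integral_of_continuousOn {F : K → H → W} {F' : K → H → H →L[𝕜] W} {U : Set H}
    (hU : IsOpen U) (hF : ContinuousOn (uncurry F) (univ ×ˢ U))
    (hF' : ContinuousOn (uncurry F') (univ ×ˢ U))
    (hFF' : ∀ k, ∀ x ∈ U, HasFDerivAt (F k) (F' k x) x) {x : H} (hx : x ∈ U) :
    HasFDerivAt (fun y => ∫ k, F k y ∂μ) (∫ k, F' k x ∂μ) x := by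
  have hF_int {y : H} (hy : y ∈ U) : Integrable (fun k => F k y) μ :=
    integrable_of_continuous_of_compactSpace <|
      hF.comp_continuous (Continuous.prodMk_left y) fun k => ⟨mem_univ k, hy⟩
  have hF'_cont : Continuous fun k => F' k x :=
    hF'.comp_continuous (Continuous.prodMk_left x) fun k => ⟨mem_univ k, hx⟩
  obtain ⟨C, hC⟩ : ∃ C, ∀ k, ‖F' k x‖ < C := by
    obtain ⟨C, hC⟩ := isCompact_univ.exists_bound_of_continuousOn hF'_cont.continuousOn
    exact ⟨C + 1, fun k => (hC k (mem_univ k)).trans_lt (lt_add_one C)⟩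
  have hF'_bound : ∀ᶠ y in 𝓝 x, ∀ k ∈ univ, ‖F' k y‖ < C := by
    refine isCompact_univ.eventually_forall_of_forall_eventually fun k _ => ?_
    have hcont : ContinuousAt (uncurry F') (k, x) :=
      hF'.continuousAt ((isOpen_univ.prod hU).mem_nhds ⟨mem_univ k, hx⟩)
    exact (continuous_swap.tendsto (x, k)).eventually (hcont.norm.eventually_lt_const (hC k))
  refine hasFDerivAt_integral_of_dominated_of_fderiv_le (F := fun y k => F k y)
    (F' := fun y k => F' k y) (bound := fun _ => C) (inter_mem hF'_bound (hU.mem_nhds hx))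
    ?_ (hF_int hx) ?_ ?_ (integrable_const C) ?_
  · filter_upwards [hU.mem_nhds hx] with y hy using (hF_int hy).aestronglyMeasurable
  · exact (integrable_of_continuous_of_compactSpace hF'_cont).aestronglyMeasurable
  · exact ae_of_all _ fun k y hy => (hy.1 k (mem_univ k)).le
  · exact ae_of_all _ fun k y hy => hFF' k y hy.2

theorem hasDerivAt_integral_of_continuousOn {F F' : K → 𝕜 → W} {U : Set 𝕜} (hU : IsOpen U)
    (hF : ContinuousOn (uncurry F) (univ ×ˢ U)) (hF' : ContinuousOn (uncurry F') (univ ×ˢ U))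
    (hFF' : ∀ k, ∀ t ∈ U, HasDerivAt (F k) (F' k t) t) {t : 𝕜} (ht : t ∈ U) :
    HasDerivAt (fun s => ∫ k, F k s ∂μ) (∫ k, F' k t ∂μ) t := by
  have hL : ContinuousOn (uncurry fun k s => ContinuousLinearMap.toSpanSingleton 𝕜 (F' k s))
      (univ ×ˢ U) :=
    (ContinuousLinearMap.toSpanSingletonCLE (𝕜 := 𝕜) (E := W)).continuous.comp_continuousOn hF'
  have hL_int : Integrable (fun k => ContinuousLinearMap.toSpanSingleton 𝕜 (F' k t)) μ :=
    integrable_of_continuous_of_compactSpace <|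
      hL.comp_continuous (Continuous.prodMk_left t) fun k => ⟨mem_univ k, ht⟩
  have h := (hasFDerivAt_integral_of_continuousOn (μ := μ) hU hF hL
    (fun k s hs => (hFF' k s hs).hasFDerivAt) ht).hasDerivAt
  simpa only [ContinuousLinearMap.integral_apply hL_int,
    ContinuousLinearMap.toSpanSingleton_apply, one_smul] using h

end ParametricIntegral

section SecondDerivative

variable {K : Type*} [TopologicalSpace K] [CompactSpace K] [MeasurableSpace K]
  [OpensMeasurableSpace K] {μ : Measure K} [IsFiniteMeasure μ]
  {𝕜 : Type*} [RCLike 𝕜] {G H V W : Type*} [NormedAddCommGroup G] [NormedSpace 𝕜 G]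
  [NormedAddCommGroup H] [NormedSpace 𝕜 H] [NormedAddCommGroup V] [NormedSpace 𝕜 V]
  [NormedAddCommGroup W] [NormedSpace 𝕜 W] [NormedSpace ℝ W] {A : K → G →L[𝕜] H}

theorem hasFDerivAt_integral_clm_comp_clm {B : K → V →L[𝕜] W} {f : H → V} (hA : Continuous A)
    (hB : Continuous B) (hf : ContDiff 𝕜 1 f) (x : G) :
    HasFDerivAt (fun y => ∫ k, B k (f (A k y)) ∂μ)
      (∫ k, B k ∘L fderiv 𝕜 f (A k x) ∘L A k ∂μ) x := by
  have : Continuous f := hf.continuous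
  have : Continuous (fderiv 𝕜 f) := hf.continuous_fderiv one_ne_zero
  refine hasFDerivAt_integral_of_continuousOn (F := fun k y => B k (f (A k y)))
    (F' := fun k y => B k ∘L fderiv 𝕜 f (A k y) ∘L A k) isOpen_univ
    (Continuous.continuousOn (by fun_prop)) (Continuous.continuousOn (by fun_prop))
    (fun k y _ => ?_) (mem_univ x)
  have hfA : HasFDerivAt f (fderiv 𝕜 f (A k y)) (A k y) :=
    (hf.differentiable one_ne_zero (A k y)).hasFDerivAt
  exact (B k).hasFDerivAt.comp y (hfA.comp y (A k).hasFDerivAt)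

set_option maxSynthPendingDepth 3 in
theorem fderiv_fderiv_integral_comp_clm {f : H → W} (hA : Continuous A) (hf : ContDiff 𝕜 2 f)
    (x a b : G) :
    fderiv 𝕜 (fderiv 𝕜 fun y => ∫ k, f (A k y) ∂μ) x a b =
      ∫ k, fderiv 𝕜 (fderiv 𝕜 f) (A k x) (A k a) (A k b) ∂μ := by
  have hf' : ContDiff 𝕜 1 (fderiv 𝕜 f) := hf.fderiv_right (by norm_num)
  have : Continuous (fderiv 𝕜 (fderiv 𝕜 f)) := hf'.continuous_fderiv one_ne_zero
  let precomp (k : K) : (H →L[𝕜] W) →L[𝕜] G →L[𝕜] W :=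
    (ContinuousLinearMap.compL 𝕜 G H W).flip (A k)
  have hprecomp : Continuous precomp := by fun_prop
  have hderiv : fderiv 𝕜 (fun y => ∫ k, f (A k y) ∂μ) =
      fun y => ∫ k, precomp k (fderiv 𝕜 f (A k y)) ∂μ :=
    funext fun y => (hasFDerivAt_integral_clm_comp_clm hA
      (continuous_const (y := .id 𝕜 W)) (hf.of_le one_le_two) y).fderiv
  have hint : Integrable
      (fun k => precomp k ∘L fderiv 𝕜 (fderiv 𝕜 f) (A k x) ∘L A k) μ :=
    integrable_of_continuous_of_compactSpace (by fun_prop)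
  rw [hderiv, (hasFDerivAt_integral_clm_comp_clm hA hprecomp hf' x).fderiv,
    ContinuousLinearMap.integral_apply hint,
    ContinuousLinearMap.integral_apply (hint.apply_continuousLinearMap a)]
  rfl

end SecondDerivative

section Laplacian

variable {E : Type*} [NormedAddCommGroup E] [InnerProductSpace ℝ E] [FiniteDimensional ℝ E]
  {W : Type*} [NormedAddCommGroup W] [NormedSpace ℝ W]

theorem laplacian_eq_innerProductSpace_laplacian {n : ℕ} (f : EuclideanSpace ℝ (Fin n) → ℝ) :
    laplacian f = Δ f := by
  rw [InnerProductSpace.laplacian_eq_iteratedFDeriv_orthonormalBasis f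
    (EuclideanSpace.basisFun (Fin n) ℝ)]
  ext x
  simp [laplacian]

theorem laplacian_eq_sum_fderiv_fderiv {ι : Type*} [Fintype ι] (b : OrthonormalBasis ι ℝ E)
    (f : E → W) (x : E) :
    Δ f x = ∑ i, fderiv ℝ (fderiv ℝ f) x (b i) (b i) := by
  simp [InnerProductSpace.laplacian_eq_iteratedFDeriv_orthonormalBasis f b,
    iteratedFDeriv_two_apply]

theorem laplacian_integral_comp_linearIsometryEquiv {K : Type*} [TopologicalSpace K]
    [CompactSpace K] [MeasurableSpace K] [OpensMeasurableSpace K] {μ : Measure K}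
    [IsFiniteMeasure μ] {e : K → E ≃ₗᵢ[ℝ] E} (he : Continuous fun k => (e k : E →L[ℝ] E))
    {f : E → W} (hf : ContDiff ℝ 2 f) (x : E) :
    Δ (fun y => ∫ k, f (e k y) ∂μ) x = ∫ k, Δ f (e k x) ∂μ := by
  let b := stdOrthonormalBasis ℝ E
  have : Continuous (fderiv ℝ (fderiv ℝ f)) :=
    (hf.fderiv_right (m := 1) (by norm_num)).continuous_fderiv one_ne_zero
  have hint (i) : Integrable
      (fun k => fderiv ℝ (fderiv ℝ f) (e k x) (e k (b i)) (e k (b i))) μ := by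
    have he_apply (y : E) : Continuous fun k => e k y := he.clm_apply continuous_const
    exact integrable_of_continuous_of_compactSpace (by fun_prop)
  calc Δ (fun y => ∫ k, f (e k y) ∂μ) x
      = ∑ i, ∫ k, fderiv ℝ (fderiv ℝ f) (e k x) (e k (b i)) (e k (b i)) ∂μ := by
        rw [laplacian_eq_sum_fderiv_fderiv b]
        exact Finset.sum_congr rfl fun i _ => fderiv_fderiv_integral_comp_clm he hf x _ _
    _ = ∫ k, Δ f (e k x) ∂μ := by
        rw [← integral_finsetSum _ fun i _ => hint i]
        congr! with k
        simp [laplacian_eq_sum_fderiv_fderiv (b.map (e k))]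

end Laplacian

section OrthogonalGroup

theorem exists_isProbabilityMeasure_isMulRightInvariant (G : Type*) [Group G] [TopologicalSpace G]
    [IsTopologicalGroup G] [CompactSpace G] [MeasurableSpace G] [BorelSpace G] :
    ∃ μ : Measure G, IsProbabilityMeasure μ ∧ μ.IsMulRightInvariant := by
  let μ : Measure G := Measure.haarMeasure ⊤
  have : IsProbabilityMeasure μ := ⟨Measure.haarMeasure_self (K₀ := ⊤)⟩
  exact ⟨μ.inv, Measure.isProbabilityMeasure_map measurable_inv.aemeasurable, inferInstance⟩

variable {E : Type*} [NormedAddCommGroup E] [InnerProductSpace ℝ E]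

theorem exists_linearIsometryEquiv_apply_eq {x y : E} (h : ‖x‖ = ‖y‖) :
    ∃ e : E ≃ₗᵢ[ℝ] E, e x = y :=
  ⟨_, Submodule.reflection_sub h⟩

variable [FiniteDimensional ℝ E]

instance compactSpace_unitary_continuousLinearMap : CompactSpace (unitary (E →L[ℝ] E)) := by
  have : ProperSpace (E →L[ℝ] E) := FiniteDimensional.proper ℝ _
  have hsub : (unitary (E →L[ℝ] E) : Set (E →L[ℝ] E)) ⊆ Metric.closedBall 0 1 := fun g hg =>
    mem_closedBall_zero_iff.mpr <| g.opNorm_le_bound zero_le_one fun x => by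
      rw [one_mul, Unitary.norm_map ⟨g, hg⟩ x]
  exact isCompact_iff_compactSpace.mp
    ((isCompact_closedBall 0 1).of_isClosed_subset isClosed_unitary hsub)

theorem integral_unitary_apply_eq_of_norm_eq {F : Type*} [NormedAddCommGroup F] [NormedSpace ℝ F]
    (μ : Measure (unitary (E →L[ℝ] E))) [μ.IsMulRightInvariant] (f : E → F) {x y : E}
    (h : ‖x‖ = ‖y‖) :
    ∫ g, f ((g : E →L[ℝ] E) x) ∂μ = ∫ g, f ((g : E →L[ℝ] E) y) ∂μ := by
  obtain ⟨e, rfl⟩ := exists_linearIsometryEquiv_apply_eq h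
  exact (integral_mul_right_eq_self (fun g : unitary (E →L[ℝ] E) => f ((g : E →L[ℝ] E) x))
    (Unitary.linearIsometryEquiv.symm e)).symm

end OrthogonalGroup

section Radialization

variable {E : Type*} [NormedAddCommGroup E] [InnerProductSpace ℝ E] [FiniteDimensional ℝ E]
  [MeasurableSpace E] [BorelSpace E] {F : Type*} [NormedAddCommGroup F] [NormedSpace ℝ F]

/-- The radialization of `f`: its value at `x` is the average of `f` over the sphere of radius `‖x‖`
centred at the origin. The average is taken over the unit sphere after rescaling, so that `x = 0`
needs no separate treatment. -/
noncomputable def radialization (f : E → F) (x : E) : F :=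
  ⨍ ω : Metric.sphere (0 : E) 1, f (‖x‖ • (ω : E)) ∂(volume : Measure E).toSphere

theorem radialization_congr {f g : E → F} {x : E} (h : ∀ y, ‖y‖ = ‖x‖ → f y = g y) :
    radialization f x = radialization g x := by
  have hfg (ω : Metric.sphere (0 : E) 1) : f (‖x‖ • (ω : E)) = g (‖x‖ • (ω : E)) :=
    h _ (by simp [norm_smul])
  simp only [radialization, hfg]

theorem radialization_const [Nontrivial E] [CompleteSpace F] (c : F) (x : E) :
    radialization (fun _ => c) x = c := by
  have : NeZero (volume : Measure E).toSphere := ⟨Measure.toSphere_ne_zero _⟩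
  exact average_const _ c

/-- The self-map of the unit sphere induced by a linear isometry, through which the invariance of
the surface measure is stated. -/
def unitSphereHomeomorph {E : Type*} [NormedAddCommGroup E] [NormedSpace ℝ E] (e : E ≃ₗᵢ[ℝ] E) :
    Metric.sphere (0 : E) 1 ≃ₜ Metric.sphere (0 : E) 1 :=
  e.toHomeomorph.subtype fun x => by simp

theorem measurePreserving_unitSphereHomeomorph (e : E ≃ₗᵢ[ℝ] E) :
    MeasurePreserving (unitSphereHomeomorph e)
      (volume : Measure E).toSphere (volume : Measure E).toSphere := by
  have hmeas : Measurable (unitSphereHomeomorph e) := (unitSphereHomeomorph e).measurable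
  refine ⟨hmeas, Measure.ext fun s hs => ?_⟩
  have hcone : Ioo (0 : ℝ) 1 • (Subtype.val '' (unitSphereHomeomorph e ⁻¹' s)) =
      e ⁻¹' (Ioo (0 : ℝ) 1 • (Subtype.val '' s)) := by
    have hval : Subtype.val '' (unitSphereHomeomorph e ⁻¹' s) = e.symm '' (Subtype.val '' s) := by
      rw [← (unitSphereHomeomorph e).image_symm, image_image, image_image]
      rfl
    rw [hval]
    exact (image_image2_distrib_right fun r y => map_smul e.symm r y).symm.trans
      (e.symm.image_eq_preimage_symm _)
  rw [Measure.map_apply hmeas hs, Measure.toSphere_apply' _ (hmeas hs),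
    Measure.toSphere_apply' _ hs, hcone,
    e.measurePreserving.measure_preimage_emb e.toHomeomorph.measurableEmbedding]

theorem radialization_comp_linearIsometryEquiv (e : E ≃ₗᵢ[ℝ] E) (f : E → F) (x : E) :
    radialization (fun y => f (e y)) x = radialization f x := by
  have he := measurePreserving_unitSphereHomeomorph e
  have h := he.integral_comp (unitSphereHomeomorph e).measurableEmbedding fun ω => f (‖x‖ • (ω : E))
  simp only [radialization, average_eq, ← h]
  simp [unitSphereHomeomorph]

theorem integral_radialization_unitary (μ : Measure (unitary (E →L[ℝ] E)))
    [IsFiniteMeasure μ] {f : E → F} (hf : Continuous f) (x : E) :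
    ∫ g : unitary (E →L[ℝ] E), radialization (fun y => f ((g : E →L[ℝ] E) y)) x ∂μ =
      radialization (fun y => ∫ g, f ((g : E →L[ℝ] E) y) ∂μ) x := by
  simp only [radialization, average_eq, integral_smul]
  congr 1
  exact integral_integral_swap_of_hasCompactSupport
    (by simp only [uncurry_def]; fun_prop) (.of_compactSpace _)

theorem radialization_eq_integral_unitary [Nontrivial E] [CompleteSpace F]
    (μ : Measure (unitary (E →L[ℝ] E))) [IsProbabilityMeasure μ] [μ.IsMulRightInvariant]
    {f : E → F} (hf : Continuous f) (x : E) :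
    radialization f x = ∫ g, f ((g : E →L[ℝ] E) x) ∂μ := by
  calc radialization f x
      = ∫ g : unitary (E →L[ℝ] E), radialization (fun y => f ((g : E →L[ℝ] E) y)) x ∂μ := by
        have (g : unitary (E →L[ℝ] E)) :
            radialization (fun y => f ((g : E →L[ℝ] E) y)) x = radialization f x :=
          radialization_comp_linearIsometryEquiv (Unitary.linearIsometryEquiv g) f x
        simp [this]
    _ = radialization (fun y => ∫ g, f ((g : E →L[ℝ] E) y) ∂μ) x :=
        integral_radialization_unitary μ hf x
    _ = radialization (fun _ => ∫ g, f ((g : E →L[ℝ] E) x) ∂μ) x :=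
        radialization_congr fun y hy => integral_unitary_apply_eq_of_norm_eq μ f hy
    _ = ∫ g, f ((g : E →L[ℝ] E) x) ∂μ := radialization_const _ x

theorem laplacian_radialization [Nontrivial E] [CompleteSpace F] {f : E → F}
    (hf : ContDiff ℝ 2 f) (x : E) :
    Δ (radialization f) x = radialization (Δ f) x := by
  obtain ⟨μ, _, _⟩ := exists_isProbabilityMeasure_isMulRightInvariant (unitary (E →L[ℝ] E))
  have hΔf : Continuous (Δ f) := by
    have : Continuous (iteratedFDeriv ℝ 2 f) := hf.continuous_iteratedFDeriv le_rfl
    rw [InnerProductSpace.laplacian_eq_iteratedFDeriv_stdOrthonormalBasis]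
    fun_prop
  rw [radialization_eq_integral_unitary μ hΔf,
    funext fun y => radialization_eq_integral_unitary μ hf.continuous y]
  exact laplacian_integral_comp_linearIsometryEquiv (e := fun g => Unitary.linearIsometryEquiv g)
    continuous_subtype_val hf x

theorem hasDerivAt_radialization {T : Set ℝ} (hT : IsOpen T) {u : ℝ × E → F}
    (hu : ContDiffOn ℝ 1 u (T ×ˢ univ)) {t : ℝ} (ht : t ∈ T) (x : E) :
    HasDerivAt (fun s => radialization (fun y => u (s, y)) x)
      (radialization (fun y => deriv (fun s => u (s, y)) t) x) t := by
  have hopen : IsOpen (T ×ˢ (univ : Set E)) := hT.prod isOpen_univ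
  have hu_deriv (y : E) (s : ℝ) (hs : s ∈ T) :
      HasDerivAt (fun s => u (s, y)) (fderiv ℝ u (s, y) (1, 0)) s :=
    ((hu.differentiableOn one_ne_zero).differentiableAt
      (hopen.mem_nhds ⟨hs, mem_univ y⟩)).hasFDerivAt.comp_hasDerivAt s
        ((hasDerivAt_id s).prodMk (hasDerivAt_const s y))
  let γ : Metric.sphere (0 : E) 1 × ℝ → ℝ × E := fun p => (p.2, ‖x‖ • (p.1 : E))
  have hγ : ContinuousOn γ (univ ×ˢ T) := Continuous.continuousOn (by fun_prop)
  have hγ_maps : MapsTo γ (univ ×ˢ T) (T ×ˢ univ) := fun p hp => ⟨hp.2, mem_univ _⟩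
  have hu' : ContinuousOn (fun p => fderiv ℝ u p (1, 0)) (T ×ˢ univ) :=
    (hu.continuousOn_fderiv_of_isOpen hopen le_rfl).clm_apply continuousOn_const
  have hderiv := hasDerivAt_integral_of_continuousOn (μ := (volume : Measure E).toSphere)
    (F := fun ω s => u (s, ‖x‖ • (ω : E)))
    (F' := fun ω s => fderiv ℝ u (s, ‖x‖ • (ω : E)) (1, 0)) hT
    (hu.continuousOn.comp hγ hγ_maps) (hu'.comp hγ hγ_maps)
    (fun ω s hs => hu_deriv _ s hs) ht
  simp only [radialization, average_eq, (hu_deriv _ t ht).deriv]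
  exact hderiv.const_smul _

theorem radialization_heat_solution_general [Nontrivial E] [CompleteSpace F] {T : Set ℝ}
    (hT : IsOpen T) {r : ℝ} {u : ℝ × E → F} (hu : ContDiffOn ℝ 2 u (T ×ˢ univ))
    (hheat : ∀ t ∈ T, ∀ x, ‖x‖ ≤ r → deriv (fun s => u (s, x)) t = Δ (fun y => u (t, y)) x)
    (hbdry : ∀ t ∈ T, ∀ y, ‖y‖ = r → u (t, y) = 0) :
    (∀ t ∈ T, ∀ x, ‖x‖ ≤ r → deriv (fun s => radialization (fun y => u (s, y)) x) t =
      Δ (radialization fun y => u (t, y)) x) ∧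
    ∀ t ∈ T, ∀ y, ‖y‖ = r → radialization (fun z => u (t, z)) y = 0 := by
  refine ⟨fun t ht x hx => ?_, fun t ht y hy => ?_⟩
  · have hut : ContDiff ℝ 2 fun y => u (t, y) := contDiffOn_univ.mp <|
      hu.comp (contDiff_prodMk_right t).contDiffOn fun y _ => ⟨ht, mem_univ y⟩
    rw [(hasDerivAt_radialization hT (hu.of_le one_le_two) ht x).deriv, laplacian_radialization hut]
    exact radialization_congr fun y hy => hheat t ht y (hy.trans_le hx)
  · rw [radialization_congr fun z hz => hbdry t ht z (hz.trans hy), radialization_const]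

end Radialization

/-- **Radialization preserves solutions of the heat equation with Dirichlet boundary conditions
on the unit ball.** If `u` is `C^∞` on `(0,∞) × E` and solves `∂u/∂t = Δu` on the closed unit
ball with `u = 0` on the unit sphere (for all `t > 0`), then its radialization
`v(t,x) = ⨍_S u(t, ‖x‖ • ω) dσ(ω)` does the same. -/
theorem radialization_heat_solution
    (n : ℕ) (hn : 1 ≤ n)
    (u : ℝ × EuclideanSpace ℝ (Fin n) → ℝ)
    (hu : ContDiffOn ℝ (⊤ : ℕ∞) u (Set.Ioi (0 : ℝ) ×ˢ (Set.univ : Set (EuclideanSpace ℝ (Fin n)))))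
    (hheat : ∀ t : ℝ, 0 < t → ∀ x : EuclideanSpace ℝ (Fin n), ‖x‖ ≤ 1 →
      deriv (fun s => u (s, x)) t = laplacian (fun y => u (t, y)) x)
    (hbdry : ∀ t : ℝ, 0 < t → ∀ y : EuclideanSpace ℝ (Fin n), ‖y‖ = 1 → u (t, y) = 0)
    (v : ℝ × EuclideanSpace ℝ (Fin n) → ℝ)
    (hv : ∀ t : ℝ, ∀ x : EuclideanSpace ℝ (Fin n), v (t, x) =
      ⨍ ω : Metric.sphere (0 : EuclideanSpace ℝ (Fin n)) 1,
        u (t, ‖x‖ • (ω : EuclideanSpace ℝ (Fin n)))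
        ∂((volume : Measure (EuclideanSpace ℝ (Fin n))).toSphere)) :
    (∀ t : ℝ, 0 < t → ∀ x : EuclideanSpace ℝ (Fin n), ‖x‖ ≤ 1 →
      deriv (fun s => v (s, x)) t = laplacian (fun y => v (t, y)) x) ∧
    (∀ t : ℝ, 0 < t → ∀ y : EuclideanSpace ℝ (Fin n), ‖y‖ = 1 → v (t, y) = 0) := by
  have : Nonempty (Fin n) := ⟨⟨0, hn⟩⟩
  obtain rfl : v = fun p => radialization (fun y => u (p.1, y)) p.2 := funext fun p => hv p.1 p.2
  simp only [laplacian_eq_innerProductSpace_laplacian] at hheat ⊢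
  exact radialization_heat_solution_general isOpen_Ioi (hu.of_le (WithTop.coe_le_coe.2 le_top))
    hheat hbdry
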